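/- Fix c ∈ 𝕋_κ and d₁, d₂ ∈ ℂ, and for each z ∈ ℂ let (u_z, u_z^[1]) be the unique solution pair of (ℓ − z)u = 0 with u_z(c) = d₁ and u_z^[1](c) = d₂. Then for every fixed x ∈ ℝ, the maps z ↦ u_z(x) and z ↦ u_z^[1](x) are entire (complex analytic on all of ℂ). -/

import Mathlib

open MeasureTheory Set Filter
open scoped ENNReal NNReal Classical

/-- Forward shift of a time scale. -/
noncomputable def tsSigma (T : Set ℝ) (t : ℝ) : ℝ :=
  if ({s | s ∈ T ∧ t < s}).Nonempty then sInf {s | s ∈ T ∧ t < s} else sSup T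

/-- Backward shift of a time scale. -/
noncomputable def tsRho (T : Set ℝ) (t : ℝ) : ℝ :=
  if ({s | s ∈ T ∧ s < t}).Nonempty then sSup {s | s ∈ T ∧ s < t} else sInf T

/-- `𝕋_κ` : the time scale with the left endpoint removed if it is finite and right-scattered. -/
noncomputable def tsKappa (T : Set ℝ) : Set ℝ :=
  if BddBelow T ∧ sInf T < tsSigma T (sInf T) then T \ {sInf T} else T

/-- Extension `p̄` of a function on `𝕋_κ` to all of `ℝ`. -/
noncomputable def extK (T : Set ℝ) (p : ℝ → ℂ) (t : ℝ) : ℂ :=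
  if t ∈ tsKappa T then p t else p (tsSigma (tsKappa T) t)

/-- Coercion of a real-valued coefficient to a complex-valued one. -/
def cR (f : ℝ → ℝ) : ℝ → ℂ := fun t => (f t : ℂ)

/-- `(u, u^[1])` is an integrated pair with density `h` against the measure `μ = dσ_κ`. -/
def IsPair (T : Set ℝ) (μ : Measure ℝ) (p : ℝ → ℂ) (u u1 h : ℝ → ℂ) : Prop :=
  ∀ c x : ℝ, c ≤ x →
    u x = u c + ∫ t in c..x, u1 t / extK T p t ∧
    u1 x = u1 c + ∫ t in Set.Ioc c x, h t ∂μ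

/-- `(u, u^[1])` is a solution pair of `(ℓ - z) u = g`. -/
def IsSLSol (T : Set ℝ) (μ : Measure ℝ) (p r q : ℝ → ℂ) (z : ℂ) (g : ℝ → ℂ)
    (u u1 : ℝ → ℂ) : Prop :=
  IsPair T μ p u u1 (fun t => (q t - z * r t) * u t - r t * g t)

/-- Wronskian of two pairs. -/
def Wr (u u1 v v1 : ℝ → ℂ) (x : ℝ) : ℂ := u x * v1 x - u1 x * v x

/-- The integrand `|u|² r` as an `ℝ≥0∞`-valued function. -/
noncomputable def sqWeight (r : ℝ → ℝ) (u : ℝ → ℂ) (t : ℝ) : ℝ≥0∞ :=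
  ((‖u t‖₊ : ℝ≥0∞)) ^ 2 * ENNReal.ofReal (r t)

/-- `u` lies in `L²` near the left endpoint `a`. -/
def L2NearLeft (T : Set ℝ) (μ : Measure ℝ) (r : ℝ → ℝ) (u : ℝ → ℂ) : Prop :=
  ∀ c ∈ tsKappa T, ∫⁻ t in {t | (∃ s ∈ T, s < t) ∧ t ≤ c} ∩ tsKappa T, sqWeight r u t ∂μ < ∞

/-- `u` lies in `L²` near the right endpoint `b`. -/
def L2NearRight (T : Set ℝ) (μ : Measure ℝ) (r : ℝ → ℝ) (u : ℝ → ℂ) : Prop :=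
  ∀ c ∈ tsKappa T, ∫⁻ t in {t | c ≤ t ∧ ∃ s ∈ T, t < s} ∩ tsKappa T, sqWeight r u t ∂μ < ∞

/-- `ℓ` is in the limit-circle case at the left endpoint. -/
def LimitCircleLeft (T : Set ℝ) (μ : Measure ℝ) (p r q : ℝ → ℝ) : Prop :=
  ∀ z : ℂ, ∀ u u1 : ℝ → ℂ, IsSLSol T μ (cR p) (cR r) (cR q) z 0 u u1 → L2NearLeft T μ r u

/-- `ℓ` is in the limit-point case at the left endpoint. -/
def LimitPointLeft (T : Set ℝ) (μ : Measure ℝ) (p r q : ℝ → ℝ) : Prop :=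
  ∀ z : ℂ, ∃ u u1 : ℝ → ℂ, IsSLSol T μ (cR p) (cR r) (cR q) z 0 u u1 ∧ ¬ L2NearLeft T μ r u

/-- `ℓ` is in the limit-circle case at the right endpoint. -/
def LimitCircleRight (T : Set ℝ) (μ : Measure ℝ) (p r q : ℝ → ℝ) : Prop :=
  ∀ z : ℂ, ∀ u u1 : ℝ → ℂ, IsSLSol T μ (cR p) (cR r) (cR q) z 0 u u1 → L2NearRight T μ r u

/-- `ℓ` is in the limit-point case at the right endpoint. -/
def LimitPointRight (T : Set ℝ) (μ : Measure ℝ) (p r q : ℝ → ℝ) : Prop :=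
  ∀ z : ℂ, ∃ u u1 : ℝ → ℂ, IsSLSol T μ (cR p) (cR r) (cR q) z 0 u u1 ∧ ¬ L2NearRight T μ r u

/-- The action `ℓ u = (-h + q u)/r` of the differential expression on a pair with density `h`. -/
noncomputable def ellApply (r q : ℝ → ℝ) (h u : ℝ → ℂ) (t : ℝ) : ℂ :=
  (-h t + (q t : ℂ) * u t) / (r t : ℂ)

/-- Membership in `L²(𝕋_κ; r dσ_κ)`. -/
def MemL2T (T : Set ℝ) (μ : Measure ℝ) (r : ℝ → ℝ) (u : ℝ → ℂ) : Prop :=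
  ∫⁻ t in tsKappa T, sqWeight r u t ∂μ < ∞

/-- The pair `(u, u^[1])` with density `h` belongs to `D_ℓ²`. -/
def MemD2 (T : Set ℝ) (μ : Measure ℝ) (p r q : ℝ → ℝ) (u u1 h : ℝ → ℂ) : Prop :=
  LocallyIntegrable h μ ∧ IsPair T μ (cR p) u u1 h ∧ MemL2T T μ r u ∧
    MemL2T T μ r (ellApply r q h u)

/-- The filter `x ↓ a`, `x ∈ 𝕋`. -/
noncomputable def leftLimFilter (T : Set ℝ) : Filter ℝ :=
  if BddBelow T then nhdsWithin (sInf T) T else Filter.atBot ⊓ Filter.principal T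

/-- The filter `x ↑ b`, `x ∈ 𝕋`. -/
noncomputable def rightLimFilter (T : Set ℝ) : Filter ℝ :=
  if BddAbove T then nhdsWithin (sSup T) T else Filter.atTop ⊓ Filter.principal T

/-- The measure `r dσ_κ` on `𝕋_κ`, giving the Hilbert space `L²(𝕋_κ; r dσ_κ)`. -/
noncomputable def wM (T : Set ℝ) (μ : Measure ℝ) (r : ℝ → ℝ) : Measure ℝ :=
  (μ.restrict (tsKappa T)).withDensity fun t => ENNReal.ofReal (r t)

/-!
Eliminating `u^[1]` turns `(ℓ - z) u = 0` into the Volterra equation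
`(1 - (K_q - z K_r)) u_z = u_z(c) + u_z^[1](c) ∫_c 1/p̄`, where
`(K_g u)(x) = ∫_c^x 1/p̄(t) ∫_c^t g u dσ_κ dt` has norm at most `‖1/p̄‖₁ ‖g‖₁` on bounded continuous
functions. On an interval so short that `K_q - z₀ K_r` has norm less than one, the operator on the
left is invertible for `z` near `z₀`, and `z ↦ u_z` is differentiable at `z₀` because inversion is.
Such short intervals exist since Lebesgue measure has no atoms, even though `dσ_κ` may have some.
Hence differentiability at `z₀` is locally constant in the base point and, `ℝ` being connected,
spreads from `c` to every `x`. Local integrability of `1/p̄` follows from that of `1/p`, because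
rounding up to the next point of the time scale pushes Lebesgue measure forward to `dρ`.
-/

open scoped BoundedContinuousFunction Topology

open scoped BoundedContinuousFunction Topology

section Primitive

variable {E : Type*} [NormedAddCommGroup E] [NormedSpace ℝ E] {μ ν : Measure ℝ}

lemma norm_intervalIntegral_le_integral_norm {g : ℝ → E} (hg : Integrable g μ) (a b : ℝ) :
    ‖∫ t in a..b, g t ∂μ‖ ≤ ∫ t, ‖g t‖ ∂μ :=
  intervalIntegral.norm_integral_le_integral_norm_uIoc.trans
    (setIntegral_le_integral hg.norm (Eventually.of_forall fun _ => norm_nonneg _))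

lemma stronglyMeasurable_intervalIntegral [SFinite μ] {g : ℝ → E} (hg : Integrable g μ) (a : ℝ) :
    StronglyMeasurable fun x => ∫ t in a..x, g t ∂μ := by
  obtain ⟨g', hg', hgg'⟩ := hg.aestronglyMeasurable
  have hIic (x : ℝ) : ∫ t in Iic x, g t ∂μ =
      ∫ t, {y : ℝ × ℝ | y.2 ≤ y.1}.indicator (fun y => g' y.2) (x, t) ∂μ := by
    rw [← integral_indicator measurableSet_Iic]
    refine integral_congr_ae (hgg'.mono fun t ht => ?_)
    simp only [indicator_apply, mem_Iic, mem_ofPred_eq, ht]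
  have hsub (x : ℝ) : ∫ t in a..x, g t ∂μ = ∫ t in Iic x, g t ∂μ - ∫ t in Iic a, g t ∂μ :=
    (intervalIntegral.integral_Iic_sub_Iic hg.integrableOn hg.integrableOn).symm
  simp only [hsub, hIic]
  refine StronglyMeasurable.sub ?_ stronglyMeasurable_const
  exact ((hg'.comp_measurable measurable_snd).indicator
    (measurableSet_le measurable_snd measurable_fst)).integral_prod_right'

lemma integrable_smul_intervalIntegral {𝕜 : Type*} [NormedRing 𝕜] [Module 𝕜 E]
    [IsBoundedSMul 𝕜 E] [SFinite μ] {φ : ℝ → 𝕜} {g : ℝ → E}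
    (hφ : Integrable φ ν) (hg : Integrable g μ) (a : ℝ) :
    Integrable (fun t => φ t • ∫ s in a..t, g s ∂μ) ν :=
  hφ.smul_bdd (∫ t, ‖g t‖ ∂μ) (stronglyMeasurable_intervalIntegral hg a).aestronglyMeasurable
    (Eventually.of_forall fun t => norm_intervalIntegral_le_integral_norm hg a t)

lemma eq_of_sub_eq_intervalIntegral_of_not_locallyIntegrable {v g : ℝ → E}
    (hv : ∀ x y, v y - v x = ∫ t in x..y, g t ∂μ) (hg : ¬ LocallyIntegrable g μ) (x y : ℝ) :
    v x = v y := by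
  obtain ⟨t₀, ht₀⟩ := not_forall.1 hg
  have eq_of_not {a b : ℝ} (h : ¬ IntervalIntegrable g μ a b) : v b = v a := by
    rw [← sub_eq_zero, hv, intervalIntegral.integral_undef h]
  have not_integrable {a b : ℝ} (ha : a < t₀) (hb : t₀ < b) : ¬ IntervalIntegrable g μ a b :=
    fun h => ht₀ ⟨Ioc a b, Ioc_mem_nhds ha hb, h.1⟩
  have across {a b : ℝ} (ha : a < t₀) (hb : t₀ < b) : v b = v a :=
    eq_of_not (not_integrable ha hb)
  have below : t₀ - 1 < t₀ := by linarith
  have above : t₀ < t₀ + 1 := by linarith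
  have h_const (x : ℝ) : v x = v (t₀ - 1) := by
    rcases lt_trichotomy x t₀ with hx | rfl | hx
    · rw [← across hx above, across below above]
    · by_cases h : IntervalIntegrable g μ (x - 1) x
      · have h' : ¬ IntervalIntegrable g μ x (x + 1) :=
          fun h' => not_integrable below above (h.trans h')
        rw [← eq_of_not h', across below above]
      · exact eq_of_not h
    · exact across below hx
  rw [h_const x, h_const y]

lemma intervalIntegral_restrict_Ioc (f : ℝ → E) (a b x y : ℝ) :
    ∫ t in x..y, f t ∂μ.restrict (Ioc a b) =
      ∫ t in max a (min b x)..max a (min b y), f t ∂μ := by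
  have hIoc (x y : ℝ) : Ioc x y ∩ Ioc a b = Ioc (max a (min b x)) (max a (min b y)) := by
    ext t
    grind
  simp only [intervalIntegral, Measure.restrict_restrict measurableSet_Ioc, hIoc]

/-- The primitive `x ↦ ∫ t in a..x, f t ∂ν` of an integrable function, as an element of the Banach
space of bounded continuous functions. -/
noncomputable def boundedPrimitive [NullSingletonClass ν] {f : ℝ → E} (hf : Integrable f ν)
    (a : ℝ) : ℝ →ᵇ E :=
  .ofNormedAddCommGroup (fun x => ∫ t in a..x, f t ∂ν)
    (intervalIntegral.continuous_primitive (fun _ _ => hf.intervalIntegrable) a)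
    (∫ t, ‖f t‖ ∂ν) (norm_intervalIntegral_le_integral_norm hf a)

@[simp]
lemma boundedPrimitive_apply [NullSingletonClass ν] {f : ℝ → E} (hf : Integrable f ν) (a x : ℝ) :
    boundedPrimitive hf a x = ∫ t in a..x, f t ∂ν := rfl

lemma norm_boundedPrimitive_le [NullSingletonClass ν] {f : ℝ → E} (hf : Integrable f ν) (a : ℝ) :
    ‖boundedPrimitive hf a‖ ≤ ∫ t, ‖f t‖ ∂ν :=
  BoundedContinuousFunction.norm_ofNormedAddCommGroup_le _ (by positivity) _

end Primitive

lemma differentiableAt_of_isUnit_of_apply {𝕜 E : Type*} [NontriviallyNormedField 𝕜]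
    [NormedAddCommGroup E] [NormedSpace 𝕜 E] [CompleteSpace E] {L : 𝕜 → E →L[𝕜] E} {w : 𝕜 → E}
    {z₀ : 𝕜} (hL : DifferentiableAt 𝕜 L z₀) (hunit : IsUnit (L z₀))
    (hLw : DifferentiableAt 𝕜 (fun z => L z (w z)) z₀) : DifferentiableAt 𝕜 w z₀ := by
  have hinv : DifferentiableAt 𝕜 (fun z => Ring.inverse (L z)) z₀ :=
    (differentiableAt_inverse hunit).comp z₀ hL
  refine (hinv.clm_apply hLw).congr_of_eventuallyEq ?_
  have hunits : ∀ᶠ z in 𝓝 z₀, IsUnit (L z) := hL.continuousAt (Units.isOpen.mem_nhds hunit)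
  filter_upwards [hunits] with z hz
  rw [← mul_apply_eq_comp, Ring.inverse_mul_cancel _ hz, one_apply_eq_self]

section Volterra

variable {𝕜 : Type*} [RCLike 𝕜] {μ ν : Measure ℝ} {φ g : ℝ → 𝕜}

lemma integrable_mul_boundedContinuousFunction (hg : Integrable g μ) (u : ℝ →ᵇ 𝕜) :
    Integrable (fun t => g t * u t) μ :=
  hg.mul_bdd u.continuous.aestronglyMeasurable (Eventually.of_forall u.norm_coe_le_norm)

/-- The functional `u ↦ ∫ t in a..b, g t * u t ∂μ` on bounded continuous functions. -/
noncomputable def weightedIntegral (hg : Integrable g μ) (a b : ℝ) : (ℝ →ᵇ 𝕜) →L[𝕜] 𝕜 :=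
  LinearMap.mkContinuous
    { toFun u := ∫ t in a..b, g t * u t ∂μ
      map_add' u w := by
        simp only [BoundedContinuousFunction.coe_add, Pi.add_apply, mul_add]
        exact intervalIntegral.integral_add
          (integrable_mul_boundedContinuousFunction hg u).intervalIntegrable
          (integrable_mul_boundedContinuousFunction hg w).intervalIntegrable
      map_smul' k u := by
        simp only [BoundedContinuousFunction.coe_smul, smul_eq_mul, mul_left_comm _ k,
          intervalIntegral.integral_const_mul, RingHom.id_apply] }
    (∫ t, ‖g t‖ ∂μ) fun u => by
      have hgu := integrable_mul_boundedContinuousFunction hg u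
      refine (norm_intervalIntegral_le_integral_norm hgu a b).trans ?_
      rw [← integral_mul_const]
      refine integral_mono hgu.norm (hg.norm.mul_const _) fun t => ?_
      rw [norm_mul]
      gcongr
      exact u.norm_coe_le_norm t

@[simp]
lemma weightedIntegral_apply (hg : Integrable g μ) (a b : ℝ) (u : ℝ →ᵇ 𝕜) :
    weightedIntegral hg a b u = ∫ t in a..b, g t * u t ∂μ := rfl

lemma norm_weightedIntegral_apply_le (hg : Integrable g μ) (a b : ℝ) (u : ℝ →ᵇ 𝕜) :
    ‖weightedIntegral hg a b u‖ ≤ (∫ t, ‖g t‖ ∂μ) * ‖u‖ :=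
  (weightedIntegral hg a b).le_of_opNorm_le
    (LinearMap.mkContinuous_norm_le _ (by positivity) _) u

variable [SFinite μ]

lemma integrable_mul_weightedIntegral (hφ : Integrable φ ν) (hg : Integrable g μ) (a : ℝ)
    (u : ℝ →ᵇ 𝕜) : Integrable (fun t => φ t * weightedIntegral hg a t u) ν :=
  integrable_smul_intervalIntegral hφ (integrable_mul_boundedContinuousFunction hg u) a

variable [NullSingletonClass ν]

/-- The Volterra operator `u ↦ (x ↦ ∫ t in a..x, φ t * ∫ s in a..t, g s * u s ∂μ ∂ν)`, obtained by
eliminating `v` from the system `du = φ v dν`, `dv = g u dμ`. -/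
noncomputable def volterraOperator (hφ : Integrable φ ν) (hg : Integrable g μ) (a : ℝ) :
    (ℝ →ᵇ 𝕜) →L[𝕜] (ℝ →ᵇ 𝕜) :=
  LinearMap.mkContinuous
    { toFun u := boundedPrimitive (integrable_mul_weightedIntegral hφ hg a u) a
      map_add' u w := by
        ext x
        simp only [boundedPrimitive_apply, map_add, mul_add, BoundedContinuousFunction.coe_add,
          Pi.add_apply]
        exact intervalIntegral.integral_add
          (integrable_mul_weightedIntegral hφ hg a u).intervalIntegrable
          (integrable_mul_weightedIntegral hφ hg a w).intervalIntegrable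
      map_smul' k u := by
        ext x
        simp only [boundedPrimitive_apply, map_smul, smul_eq_mul, mul_left_comm _ k,
          intervalIntegral.integral_const_mul, RingHom.id_apply,
          BoundedContinuousFunction.coe_smul] }
    ((∫ t, ‖φ t‖ ∂ν) * ∫ t, ‖g t‖ ∂μ) fun u => by
      have hφu := integrable_mul_weightedIntegral hφ hg a u
      refine (norm_boundedPrimitive_le hφu a).trans ?_
      rw [mul_assoc, ← integral_mul_const]
      refine integral_mono hφu.norm (hφ.norm.mul_const _) fun t => ?_
      rw [norm_mul]
      gcongr
      exact norm_weightedIntegral_apply_le hg a t u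

@[simp]
lemma volterraOperator_apply (hφ : Integrable φ ν) (hg : Integrable g μ) (a : ℝ) (u : ℝ →ᵇ 𝕜)
    (x : ℝ) : volterraOperator hφ hg a u x = ∫ t in a..x, φ t * weightedIntegral hg a t u ∂ν :=
  rfl

lemma norm_volterraOperator_le (hφ : Integrable φ ν) (hg : Integrable g μ) (a : ℝ) :
    ‖volterraOperator hφ hg a‖ ≤ (∫ t, ‖φ t‖ ∂ν) * ∫ t, ‖g t‖ ∂μ :=
  LinearMap.mkContinuous_norm_le _ (by positivity) _

end Volterra

lemma tendsto_setIntegral_norm_Ioc_sub_add {E : Type*} [NormedAddCommGroup E]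
    {ν : Measure ℝ} [NullSingletonClass ν] {φ : ℝ → E} (hφ : LocallyIntegrable φ ν) (c : ℝ) :
    Tendsto (fun δ => ∫ t in Ioc (c - δ) (c + δ), ‖φ t‖ ∂ν) (𝓝[>] 0) (𝓝 0) := by
  have h_int (a b : ℝ) : IntervalIntegrable (fun t => ‖φ t‖) ν a b :=
    (hφ.integrableOn_isCompact isCompact_uIcc).intervalIntegrable.norm
  have hcont : Continuous fun δ => ∫ t in (c - δ)..(c + δ), ‖φ t‖ ∂ν := by
    have hprim : Continuous fun x => ∫ t in c..x, ‖φ t‖ ∂ν :=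
      intervalIntegral.continuous_primitive h_int c
    simp only [← fun δ => intervalIntegral.integral_interval_sub_left (h_int c (c + δ))
      (h_int c (c - δ))]
    fun_prop
  have hlim : Tendsto (fun δ => ∫ t in (c - δ)..(c + δ), ‖φ t‖ ∂ν) (𝓝[>] 0) (𝓝 0) := by
    simpa using (hcont.tendsto 0).mono_left nhdsWithin_le_nhds
  refine hlim.congr' ?_
  filter_upwards [self_mem_nhdsWithin] with δ (hδ : 0 < δ)
  exact intervalIntegral.integral_of_le (by linarith)

lemma exists_setIntegral_norm_mul_lt_one {E : Type*} [NormedAddCommGroup E] {ν μ : Measure ℝ}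
    [NullSingletonClass ν] {φ q r : ℝ → E} (hφ : LocallyIntegrable φ ν)
    (hq : LocallyIntegrable q μ) (hr : LocallyIntegrable r μ) {k : ℝ} (hk : 0 ≤ k) (c : ℝ) :
    ∃ a b, a < c ∧ c < b ∧ (∫ t in Ioc a b, ‖φ t‖ ∂ν) *
      (∫ t in Ioc a b, ‖q t‖ ∂μ + k * ∫ t in Ioc a b, ‖r t‖ ∂μ) < 1 := by
  set M := ∫ t in Ioc (c - 1) (c + 1), ‖q t‖ ∂μ + k * ∫ t in Ioc (c - 1) (c + 1), ‖r t‖ ∂μ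
  have hsmall : ∀ᶠ δ in 𝓝[>] (0 : ℝ), (∫ t in Ioc (c - δ) (c + δ), ‖φ t‖ ∂ν) * M < 1 := by
    refine ((tendsto_setIntegral_norm_Ioc_sub_add hφ c).mul_const M).eventually_lt_const ?_
    rw [zero_mul]
    exact one_pos
  have hlt : ∀ᶠ δ in 𝓝[>] (0 : ℝ), δ < 1 := nhdsWithin_le_nhds (gt_mem_nhds one_pos)
  obtain ⟨δ, hδM, hδ1, hδ : 0 < δ⟩ := (hsmall.and (hlt.and self_mem_nhdsWithin)).exists
  have hmono {f : ℝ → E} (hf : LocallyIntegrable f μ) :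
      ∫ t in Ioc (c - δ) (c + δ), ‖f t‖ ∂μ ≤ ∫ t in Ioc (c - 1) (c + 1), ‖f t‖ ∂μ := by
    have h_int : IntegrableOn f (Ioc (c - 1) (c + 1)) μ :=
      (hf.integrableOn_isCompact isCompact_Icc).mono_set Ioc_subset_Icc_self
    exact setIntegral_mono_set h_int.norm (Eventually.of_forall fun _ => norm_nonneg _)
      (Ioc_subset_Ioc (by linarith) (by linarith)).eventuallyLE
  refine ⟨c - δ, c + δ, by linarith, by linarith, lt_of_le_of_lt ?_ hδM⟩
  exact mul_le_mul_of_nonneg_left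
    (add_le_add (hmono hq) (mul_le_mul_of_nonneg_left (hmono hr) hk)) (by positivity)

section System

variable {𝕜 : Type*} [RCLike 𝕜]

/-- `(u, v)` solves the system of integral equations `du = φ v dν`, `dv = h u dμ` on `ℝ`. The
increments are interval integrals over `(x, y]`, so both equations may be read in either
direction. -/
structure IsSystemSolution (ν μ : Measure ℝ) (φ h u v : ℝ → 𝕜) : Prop where
  fst_sub : ∀ x y, u y - u x = ∫ t in x..y, φ t * v t ∂ν
  snd_sub : ∀ x y, v y - v x = ∫ t in x..y, h t * u t ∂μ

namespace IsSystemSolution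

variable {ν μ : Measure ℝ} {φ q r h u v : ℝ → 𝕜}

lemma of_forall_le
    (hu : ∀ x y, x ≤ y → u y = u x + ∫ t in x..y, φ t * v t ∂ν)
    (hv : ∀ x y, x ≤ y → v y = v x + ∫ t in Ioc x y, h t * u t ∂μ) :
    IsSystemSolution ν μ φ h u v where
  fst_sub x y := by
    rcases le_total x y with hxy | hxy
    · rw [hu x y hxy, add_sub_cancel_left]
    · rw [hu y x hxy, sub_add_cancel_left, intervalIntegral.integral_symm, neg_neg]
  snd_sub x y := by
    rcases le_total x y with hxy | hxy
    · rw [hv x y hxy, add_sub_cancel_left, intervalIntegral.integral_of_le hxy]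
    · rw [hv y x hxy, sub_add_cancel_left, intervalIntegral.integral_of_ge hxy]

lemma intervalIntegrable_mul_snd [SFinite μ] (hsol : IsSystemSolution ν μ φ h u v)
    (hφ : LocallyIntegrable φ ν) (hhu : LocallyIntegrable (fun t => h t * u t) μ) (a b : ℝ) :
    IntervalIntegrable (fun t => φ t * v t) ν a b := by
  have hφ_int : Integrable φ (ν.restrict (uIcc a b)) := hφ.integrableOn_isCompact isCompact_uIcc
  have hhu_int := hhu.integrableOn_isCompact (isCompact_uIcc (a := a) (b := b))
  have h_int : IntegrableOn (fun t => φ t * v t) (uIcc a b) ν := by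
    refine ((hφ_int.mul_const (v a)).add
      (integrable_smul_intervalIntegral hφ_int hhu_int a)).congr ?_
    filter_upwards [ae_restrict_mem measurableSet_uIcc] with t ht
    have hsub : uIoc a t ⊆ uIcc a b :=
      uIoc_subset_uIcc.trans (uIcc_subset_uIcc left_mem_uIcc ht)
    have hcut : ∫ s in a..t, h s * u s ∂μ.restrict (uIcc a b) = v t - v a := by
      rw [hsol.snd_sub, intervalIntegral.intervalIntegral_eq_integral_uIoc,
        intervalIntegral.intervalIntegral_eq_integral_uIoc,
        Measure.restrict_restrict_of_subset hsub]
    simp only [Pi.add_apply, smul_eq_mul, hcut]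
    ring
  exact h_int.intervalIntegrable

-- Nothing is assumed about the integrability of `h u`: where it fails, the junk value of the
-- integral forces `v` to be constant, so `φ v` is integrable in either case.
lemma continuous_fst [NullSingletonClass ν] [SFinite μ] (hsol : IsSystemSolution ν μ φ h u v)
    (hφ : LocallyIntegrable φ ν) : Continuous u := by
  suffices h_int : ∀ a b, IntervalIntegrable (fun t => φ t * v t) ν a b by
    have hu : u = fun x => u 0 + ∫ t in (0 : ℝ)..x, φ t * v t ∂ν := by
      ext x
      rw [← hsol.fst_sub, add_sub_cancel]
    rw [hu]
    exact continuous_const.add (intervalIntegral.continuous_primitive h_int 0)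
  by_cases hhu : LocallyIntegrable (fun t => h t * u t) μ
  · exact hsol.intervalIntegrable_mul_snd hφ hhu
  · have hv (t : ℝ) : v t = v 0 :=
      eq_of_sub_eq_intervalIntegral_of_not_locallyIntegrable hsol.snd_sub hhu t 0
    intro a b
    simp only [hv]
    exact ((hφ.integrableOn_isCompact isCompact_uIcc).intervalIntegrable).mul_const (v 0)

lemma restrict_Ioc (hsol : IsSystemSolution ν μ φ h u v) (a b : ℝ) :
    IsSystemSolution (ν.restrict (Ioc a b)) (μ.restrict (Ioc a b)) φ h
      (fun x => u (max a (min b x))) (fun x => v (max a (min b x))) := by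
  have hclamp {x y t : ℝ} (ht : t ∈ uIcc (max a (min b x)) (max a (min b y))) :
      max a (min b t) = t := by
    grind [mem_uIcc]
  constructor <;> intro x y
  · rw [hsol.fst_sub, intervalIntegral_restrict_Ioc]
    exact intervalIntegral.integral_congr fun t ht => by simp only [hclamp ht]
  · rw [hsol.snd_sub, intervalIntegral_restrict_Ioc]
    exact intervalIntegral.integral_congr fun t ht => by simp only [hclamp ht]

lemma snd_eq_add_weightedIntegral (hq : Integrable q μ) (hr : Integrable r μ)
    {z : 𝕜} {u : ℝ →ᵇ 𝕜} {v : ℝ → 𝕜}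
    (hsol : IsSystemSolution ν μ φ (fun t => q t - z * r t) u v) (c x : ℝ) :
    v x = v c + (weightedIntegral hq c x u - z * weightedIntegral hr c x u) := by
  have hqu := (integrable_mul_boundedContinuousFunction hq u).intervalIntegrable (a := c) (b := x)
  have hru := (integrable_mul_boundedContinuousFunction hr u).intervalIntegrable (a := c) (b := x)
  simp only [weightedIntegral_apply]
  rw [← intervalIntegral.integral_const_mul, ← intervalIntegral.integral_sub hqu
    (hru.const_mul z), ← sub_eq_iff_eq_add', hsol.snd_sub]
  exact intervalIntegral.integral_congr fun t _ => by ring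

variable [NullSingletonClass ν] [SFinite μ]

lemma one_sub_volterraOperator_apply (hφ : Integrable φ ν) (hq : Integrable q μ)
    (hr : Integrable r μ) {z : 𝕜} {u : ℝ →ᵇ 𝕜} {v : ℝ → 𝕜}
    (hsol : IsSystemSolution ν μ φ (fun t => q t - z * r t) u v) (c : ℝ) :
    (1 - (volterraOperator hφ hq c - z • volterraOperator hφ hr c)) u =
      u c • 1 + v c • boundedPrimitive hφ c := by
  ext x
  have hφq := (integrable_mul_weightedIntegral hφ hq c u).intervalIntegrable (a := c) (b := x)
  have hφr := (integrable_mul_weightedIntegral hφ hr c u).intervalIntegrable (a := c) (b := x)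
  have hφv := (hφ.const_mul (v c)).intervalIntegrable (a := c) (b := x)
  have hfst : u x - u c = v c * (∫ t in c..x, φ t ∂ν) +
      (volterraOperator hφ hq c u x - z * volterraOperator hφ hr c u x) := by
    rw [hsol.fst_sub, volterraOperator_apply, volterraOperator_apply,
      ← intervalIntegral.integral_const_mul, ← intervalIntegral.integral_const_mul,
      ← intervalIntegral.integral_sub hφq (hφr.const_mul z),
      ← intervalIntegral.integral_add hφv (hφq.sub (hφr.const_mul z))]
    refine intervalIntegral.integral_congr fun t _ => ?_
    simp only [hsol.snd_eq_add_weightedIntegral hq hr c t]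
    ring
  simp only [sub_apply, one_apply_eq_self, smul_apply, BoundedContinuousFunction.coe_sub,
    BoundedContinuousFunction.coe_smul, BoundedContinuousFunction.coe_add,
    BoundedContinuousFunction.coe_one, Pi.sub_apply, Pi.add_apply, Pi.one_apply,
    boundedPrimitive_apply, smul_eq_mul]
  linear_combination hfst

variable {z₀ : 𝕜}

lemma differentiableAt_of_integrable (hφ : Integrable φ ν) (hq : Integrable q μ)
    (hr : Integrable r μ) {u : 𝕜 → ℝ →ᵇ 𝕜} {v : 𝕜 → ℝ → 𝕜}
    (hsol : ∀ z, IsSystemSolution ν μ φ (fun t => q t - z * r t) (u z) (v z))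
    (hsmall : (∫ t, ‖φ t‖ ∂ν) * (∫ t, ‖q t‖ ∂μ + ‖z₀‖ * ∫ t, ‖r t‖ ∂μ) < 1) {c : ℝ}
    (huc : DifferentiableAt 𝕜 (fun z => u z c) z₀) (hvc : DifferentiableAt 𝕜 (fun z => v z c) z₀)
    (x : ℝ) :
    DifferentiableAt 𝕜 (fun z => u z x) z₀ ∧ DifferentiableAt 𝕜 (fun z => v z x) z₀ := by
  set K : 𝕜 → (ℝ →ᵇ 𝕜) →L[𝕜] (ℝ →ᵇ 𝕜) :=
    fun z => volterraOperator hφ hq c - z • volterraOperator hφ hr c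
  have hK : ‖K z₀‖ < 1 := by
    refine lt_of_le_of_lt ?_ hsmall
    calc ‖K z₀‖ ≤ ‖volterraOperator hφ hq c‖ + ‖z₀‖ * ‖volterraOperator hφ hr c‖ :=
          (norm_sub_le _ _).trans_eq (by rw [norm_smul])
      _ ≤ (∫ t, ‖φ t‖ ∂ν) * (∫ t, ‖q t‖ ∂μ) +
            ‖z₀‖ * ((∫ t, ‖φ t‖ ∂ν) * ∫ t, ‖r t‖ ∂μ) := by
          gcongr <;> exact norm_volterraOperator_le _ _ _
      _ = (∫ t, ‖φ t‖ ∂ν) * (∫ t, ‖q t‖ ∂μ + ‖z₀‖ * ∫ t, ‖r t‖ ∂μ) := by ring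
  have hKu : DifferentiableAt 𝕜 (fun z => (1 - K z) (u z)) z₀ := by
    simp only [K, (hsol _).one_sub_volterraOperator_apply hφ hq hr c]
    exact (huc.smul_const _).add (hvc.smul_const _)
  have hu : DifferentiableAt 𝕜 u z₀ :=
    differentiableAt_of_isUnit_of_apply (by fun_prop) (isUnit_one_sub_of_norm_lt_one hK) hKu
  have heval : DifferentiableAt 𝕜 (BoundedContinuousFunction.evalCLM 𝕜 x ∘ u) z₀ := by fun_prop
  refine ⟨heval, ?_⟩
  simp only [(hsol _).snd_eq_add_weightedIntegral hq hr c x]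
  fun_prop

lemma exists_mem_nhds_differentiableAt_imp (hφ : LocallyIntegrable φ ν)
    (hq : LocallyIntegrable q μ) (hr : LocallyIntegrable r μ) {u v : 𝕜 → ℝ → 𝕜}
    (hsol : ∀ z, IsSystemSolution ν μ φ (fun t => q t - z * r t) (u z) (v z)) (c : ℝ) :
    ∃ s ∈ 𝓝 c, ∀ x ∈ s, ∀ y ∈ s,
      DifferentiableAt 𝕜 (fun z => u z x) z₀ ∧ DifferentiableAt 𝕜 (fun z => v z x) z₀ →
      DifferentiableAt 𝕜 (fun z => u z y) z₀ ∧ DifferentiableAt 𝕜 (fun z => v z y) z₀ := by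
  obtain ⟨a, b, hac, hcb, hsmall⟩ := exists_setIntegral_norm_mul_lt_one hφ hq hr (norm_nonneg z₀) c
  have hab : a ≤ b := (hac.trans hcb).le
  have hu (z : 𝕜) : Continuous (u z) := (hsol z).continuous_fst hφ
  let clamped (z : 𝕜) : ℝ →ᵇ 𝕜 :=
    (BoundedContinuousFunction.mkOfCompact ((⟨u z, hu z⟩ : C(ℝ, 𝕜)).restrict (Icc a b)))
      |>.compContinuous ⟨projIcc a b hab, continuous_projIcc⟩
  have hclamped (z : 𝕜) (x : ℝ) : clamped z x = u z (max a (min b x)) := rfl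
  have hclamp {x : ℝ} (hx : x ∈ Icc a b) : max a (min b x) = x := by
    rw [min_eq_right hx.2, max_eq_right hx.1]
  refine ⟨Icc a b, Icc_mem_nhds hac hcb, fun x hx y hy hD => ?_⟩
  have h_int {f : ℝ → 𝕜} {m : Measure ℝ} (hf : LocallyIntegrable f m) :
      Integrable f (m.restrict (Ioc a b)) :=
    (hf.integrableOn_isCompact isCompact_Icc).mono_set Ioc_subset_Icc_self
  have hDy := differentiableAt_of_integrable (u := clamped) (h_int hφ) (h_int hq) (h_int hr)
    (fun z => (hsol z).restrict_Ioc a b) hsmall (c := x)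
    (by simpa only [hclamped, hclamp hx] using hD.1)
    (by simpa only [hclamp hx] using hD.2) y
  simpa only [hclamped, hclamp hy] using hDy

theorem differentiable_of_differentiable (hφ : LocallyIntegrable φ ν) (hq : LocallyIntegrable q μ)
    (hr : LocallyIntegrable r μ) {u v : 𝕜 → ℝ → 𝕜}
    (hsol : ∀ z, IsSystemSolution ν μ φ (fun t => q t - z * r t) (u z) (v z)) {c : ℝ}
    (huc : Differentiable 𝕜 fun z => u z c) (hvc : Differentiable 𝕜 fun z => v z c) (x : ℝ) :
    Differentiable 𝕜 (fun z => u z x) ∧ Differentiable 𝕜 fun z => v z x := by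
  rw [Differentiable, Differentiable, ← forall_and]
  intro z₀
  refine PreconnectedSpace.induction₂'
    (fun x y : ℝ =>
      DifferentiableAt 𝕜 (fun z => u z x) z₀ ∧ DifferentiableAt 𝕜 (fun z => v z x) z₀ →
      DifferentiableAt 𝕜 (fun z => u z y) z₀ ∧ DifferentiableAt 𝕜 (fun z => v z y) z₀)
    (fun x => ?_) ⟨fun _ _ _ hxy hyw => hyw ∘ hxy⟩ c x ⟨huc z₀, hvc z₀⟩
  obtain ⟨s, hs, hD⟩ := exists_mem_nhds_differentiableAt_imp hφ hq hr hsol (z₀ := z₀) x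
  filter_upwards [hs] with y hy
  exact ⟨hD x (mem_of_mem_nhds hs) y hy, hD y hy x (mem_of_mem_nhds hs)⟩

end IsSystemSolution

end System

section TimeScale

variable {T : Set ℝ} {t : ℝ}

lemma tsKappa_subset (T : Set ℝ) : tsKappa T ⊆ T := by
  unfold tsKappa
  split_ifs
  exacts [sdiff_subset, subset_rfl]

lemma mem_tsKappa_iff_of_lt {s : ℝ} (hs : s ∈ T) (hst : s < t) : t ∈ tsKappa T ↔ t ∈ T := by
  unfold tsKappa
  split_ifs with h
  · have hne : t ≠ sInf T := ((csInf_le h.1 hs).trans_lt hst).ne'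
    simp [hne]
  · rfl

lemma tsRho_mem (hne : T.Nonempty) (hcl : IsClosed T) (t : ℝ) : tsRho T t ∈ T := by
  unfold tsRho
  split_ifs with h
  · exact hcl.closure_subset_iff.2 (fun x hx => hx.1)
      (csSup_mem_closure h ⟨t, fun x hx => hx.2.le⟩)
  · exact hcl.csInf_mem hne ⟨t, fun x hx => not_lt.1 fun hxt => h ⟨x, hx, hxt⟩⟩

lemma le_tsRho {s : ℝ} (hs : s ∈ T) (hst : s < t) : s ≤ tsRho T t := by
  rw [tsRho, if_pos ⟨s, hs, hst⟩]
  exact le_csSup ⟨t, fun x hx => hx.2.le⟩ ⟨hs, hst⟩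

lemma exists_mem_Ioo_of_lt_tsRho {s e : ℝ} (hs : s ∈ T) (hst : s < t) (ht : t < tsRho T e) :
    ∃ x ∈ T, t < x ∧ x < e := by
  unfold tsRho at ht
  split_ifs at ht with h
  · obtain ⟨x, ⟨hx, hxe⟩, htx⟩ := exists_lt_of_lt_csSup h ht
    exact ⟨x, hx, htx, hxe⟩
  · have hbdd : BddBelow T := ⟨e, fun x hx => not_lt.1 fun hxe => h ⟨x, hx, hxe⟩⟩
    exact absurd (csInf_le hbdd hs) (hst.trans ht).not_ge

/-- The smallest point of the time scale that is at least `t`, meaningful when there is one. It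
serves to express `p̄` and pushes Lebesgue measure on `tsHull T` forward to `dρ`. -/
noncomputable def tsCeil (T : Set ℝ) (t : ℝ) : ℝ :=
  sInf (T ∩ Ici t)

lemma isLeast_tsCeil (hcl : IsClosed T) (ht : (T ∩ Ici t).Nonempty) :
    IsLeast (T ∩ Ici t) (tsCeil T t) :=
  (hcl.inter isClosed_Ici).isLeast_csInf ht ⟨t, fun _ hx => hx.2⟩

/-- The convex hull of the time scale without its left endpoint `inf T`, if any: the region where
`p̄ t = p (tsCeil T t)`. -/
def tsHull (T : Set ℝ) : Set ℝ :=
  {t | (T ∩ Iio t).Nonempty ∧ (T ∩ Ici t).Nonempty}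

lemma measurableSet_tsHull (T : Set ℝ) : MeasurableSet (tsHull T) := by
  refine OrdConnected.measurableSet ⟨?_⟩
  rintro x ⟨⟨s, hs, hsx⟩, -⟩ y ⟨-, s', hs', hys'⟩ t ⟨hxt, hty⟩
  exact ⟨⟨s, hs, hsx.trans_le hxt⟩, s', hs', hty.trans hys'⟩

lemma extK_eq_apply_tsCeil (hcl : IsClosed T) (p : ℝ → ℂ) (ht : t ∈ tsHull T) :
    extK T p t = p (tsCeil T t) := by
  obtain ⟨⟨s, hs, hst⟩, hne⟩ := ht
  by_cases hκ : t ∈ tsKappa T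
  · have hleast : IsLeast (T ∩ Ici t) t := ⟨⟨tsKappa_subset T hκ, self_mem_Ici⟩, fun _ hx => hx.2⟩
    rw [extK, if_pos hκ, (isLeast_tsCeil hcl hne).unique hleast]
  · have hT : t ∉ T := fun h => hκ ((mem_tsKappa_iff_of_lt hs hst).2 h)
    have hset : {x | x ∈ tsKappa T ∧ t < x} = T ∩ Ici t := by
      ext x
      refine ⟨fun ⟨hx, htx⟩ => ⟨tsKappa_subset T hx, htx.le⟩, fun ⟨hx, htx⟩ => ?_⟩
      have htx' : t < x := lt_of_le_of_ne htx fun h => hT (h ▸ hx)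
      exact ⟨(mem_tsKappa_iff_of_lt hs (hst.trans htx')).2 hx, htx'⟩
    rw [extK, if_neg hκ, tsSigma, hset, if_pos hne, tsCeil]

lemma extK_eq_of_forall_lt (p : ℝ → ℂ) (ht : ∀ s ∈ T, s < t) :
    extK T p t = p (sSup (tsKappa T)) := by
  have hκ : t ∉ tsKappa T := fun h => (ht t (tsKappa_subset T h)).false
  have hempty : ¬ {s | s ∈ tsKappa T ∧ t < s}.Nonempty :=
    fun ⟨s, hs, hts⟩ => hts.asymm (ht s (tsKappa_subset T hs))
  rw [extK, if_neg hκ, tsSigma, if_neg hempty]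

lemma extK_eq_of_forall_gt (p : ℝ → ℂ) (ht : ∀ s ∈ T, t < s) :
    extK T p t =
      p (if (tsKappa T).Nonempty then sInf (tsKappa T) else sSup (tsKappa T)) := by
  have hκ : t ∉ tsKappa T := fun h => (ht t (tsKappa_subset T h)).false
  have hset : {s | s ∈ tsKappa T ∧ t < s} = tsKappa T := by
    ext s
    exact ⟨fun h => h.1, fun hs => ⟨hs, ht s (tsKappa_subset T hs)⟩⟩
  rw [extK, if_neg hκ, tsSigma, hset]

lemma aemeasurable_tsCeil (hcl : IsClosed T) :
    AEMeasurable (tsCeil T) (volume.restrict (tsHull T)) := by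
  refine aemeasurable_restrict_of_monotoneOn (measurableSet_tsHull T) fun x hx y hy hxy => ?_
  have hy' := isLeast_tsCeil hcl hy.2
  exact (isLeast_tsCeil hcl hx.2).2 ⟨hy'.1.1, hxy.trans hy'.1.2⟩

lemma le_tsRho_of_tsCeil_lt (hcl : IsClosed T) {e : ℝ} (ht : t ∈ tsHull T)
    (h : tsCeil T t < e) : t ≤ tsRho T e :=
  have hceil := (isLeast_tsCeil hcl ht.2).1
  hceil.2.trans (le_tsRho hceil.1 h)

lemma tsCeil_lt_of_lt_tsRho (hcl : IsClosed T) {e : ℝ} (ht : t ∈ tsHull T)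
    (h : t < tsRho T e) : tsCeil T t < e := by
  obtain ⟨s, hs, hst⟩ := ht.1
  obtain ⟨x, hx, htx, hxe⟩ := exists_mem_Ioo_of_lt_tsRho hs hst h
  exact ((isLeast_tsCeil hcl ht.2).2 ⟨hx, htx.le⟩).trans_lt hxe

-- Off the two points `ρ c` and `ρ d`, the conditions `e ≤ tsCeil T t` and `ρ e < t` agree for
-- `e = c, d`.
lemma tsCeil_preimage_Ico_ae_eq (hne : T.Nonempty) (hcl : IsClosed T) (c d : ℝ) :
    (tsCeil T ⁻¹' Ico c d ∩ tsHull T : Set ℝ) =ᵐ[volume] Ioc (tsRho T c) (tsRho T d) := by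
  have hc : ∀ᵐ t : ℝ, t ≠ tsRho T c := Measure.ae_ne volume _
  have hd : ∀ᵐ t : ℝ, t ≠ tsRho T d := Measure.ae_ne volume _
  filter_upwards [hc, hd] with t htc htd
  refine propext ⟨fun ⟨⟨hct, htd'⟩, ht⟩ => ⟨?_, le_tsRho_of_tsCeil_lt hcl ht htd'⟩,
    fun ⟨hct, htd'⟩ => ?_⟩
  · refine lt_of_le_of_ne (not_lt.1 fun h => ?_) htc.symm
    exact (tsCeil_lt_of_lt_tsRho hcl ht h).not_ge hct
  · have ht : t ∈ tsHull T := ⟨⟨_, tsRho_mem hne hcl c, hct⟩, _, tsRho_mem hne hcl d, htd'⟩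
    refine ⟨⟨not_lt.1 fun h => (le_tsRho_of_tsCeil_lt hcl ht h).not_gt hct, ?_⟩, ht⟩
    exact tsCeil_lt_of_lt_tsRho hcl ht (lt_of_le_of_ne htd' htd)

lemma isLocallyFiniteMeasure_of_Ico {ν : Measure ℝ} (h : ∀ c d, c ≤ d → ν (Ico c d) ≠ ∞) :
    IsLocallyFiniteMeasure ν :=
  ⟨fun x => ⟨Ico (x - 1) (x + 1), Ico_mem_nhds (by linarith) (by linarith),
    (h _ _ (by linarith)).lt_top⟩⟩

lemma isLocallyFiniteMeasure_of_Ioc {μ : Measure ℝ} (h : ∀ c d, c ≤ d → μ (Ioc c d) ≠ ∞) :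
    IsLocallyFiniteMeasure μ :=
  ⟨fun x => ⟨Ioc (x - 1) (x + 1), Ioc_mem_nhds (by linarith) (by linarith),
    (h _ _ (by linarith)).lt_top⟩⟩

lemma map_tsCeil_restrict_tsHull (hne : T.Nonempty) (hcl : IsClosed T) {ν : Measure ℝ}
    (hν : ∀ c d, c ≤ d → ν (Ico c d) = ENNReal.ofReal (tsRho T d - tsRho T c)) :
    (volume.restrict (tsHull T)).map (tsCeil T) = ν := by
  have : IsLocallyFiniteMeasure ν :=
    isLocallyFiniteMeasure_of_Ico fun c d hcd => hν c d hcd ▸ ENNReal.ofReal_ne_top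
  refine (Measure.ext_of_Ico _ _ fun c d hcd => ?_).symm
  rw [hν c d hcd.le, Measure.map_apply_of_aemeasurable (aemeasurable_tsCeil hcl) measurableSet_Ico,
    Measure.restrict_apply₀' (measurableSet_tsHull T).nullMeasurableSet, ← Real.volume_Ioc,
    measure_congr (tsCeil_preimage_Ico_ae_eq hne hcl c d)]

lemma exists_tsCeil_le (hcl : IsClosed T) (b : ℝ) :
    ∃ b', ∀ t ∈ tsHull T, t ≤ b → tsCeil T t ≤ b' := by
  by_cases h : ∃ s ∈ T, b ≤ s
  · obtain ⟨s, hs, hbs⟩ := h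
    exact ⟨s, fun t ht htb => (isLeast_tsCeil hcl ht.2).2 ⟨hs, htb.trans hbs⟩⟩
  · push Not at h
    exact ⟨b, fun t ht _ => (h _ (isLeast_tsCeil hcl ht.2).1.1).le⟩

lemma integrableOn_comp_tsCeil {E : Type*} [NormedAddCommGroup E] (hne : T.Nonempty)
    (hcl : IsClosed T) {ν : Measure ℝ}
    (hν : ∀ c d, c ≤ d → ν (Ico c d) = ENNReal.ofReal (tsRho T d - tsRho T c)) {g : ℝ → E}
    (hg : LocallyIntegrable g ν) {k : Set ℝ} (hk : IsCompact k) :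
    IntegrableOn (fun t => g (tsCeil T t)) (k ∩ tsHull T) := by
  obtain ⟨a, ha⟩ := hk.bddBelow
  obtain ⟨b, hb⟩ := hk.bddAbove
  obtain ⟨b', hb'⟩ := exists_tsCeil_le hcl b
  have hg' : IntegrableOn g (Icc a b') ((volume.restrict (tsHull T)).map (tsCeil T)) := by
    rw [map_tsCeil_restrict_tsHull hne hcl hν]
    exact hg.integrableOn_isCompact isCompact_Icc
  have hceil := aemeasurable_tsCeil hcl
  rw [IntegrableOn, Measure.restrict_map_of_aemeasurable hceil measurableSet_Icc] at hg'
  have hcomp : IntegrableOn (fun t => g (tsCeil T t)) (tsCeil T ⁻¹' Icc a b')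
      (volume.restrict (tsHull T)) :=
    hg'.comp_aemeasurable (hceil.mono_measure Measure.restrict_le_self)
  have hsub : k ∩ tsHull T ⊆ tsCeil T ⁻¹' Icc a b' := fun t ⟨htk, ht⟩ =>
    ⟨(ha htk).trans (isLeast_tsCeil hcl ht.2).1.2, hb' t ht (hb htk)⟩
  have h_int := hcomp.mono_set hsub
  rwa [IntegrableOn, Measure.restrict_restrict_of_subset inter_subset_right] at h_int

lemma mem_tsHull_or (T : Set ℝ) (t : ℝ) :
    t ∈ tsHull T ∨ (∀ s ∈ T, s < t) ∨ (∀ s ∈ T, t < s) ∨ t = sInf T := by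
  by_cases hleft : (T ∩ Iio t).Nonempty
  · by_cases hright : (T ∩ Ici t).Nonempty
    · exact .inl ⟨hleft, hright⟩
    · exact .inr (.inl fun s hs => not_le.1 fun hts => hright ⟨s, hs, hts⟩)
  · have hle : t ∈ lowerBounds T := fun s hs => not_lt.1 fun hst => hleft ⟨s, hs, hst⟩
    by_cases htT : t ∈ T
    · exact .inr (.inr (.inr (IsLeast.csInf_eq ⟨htT, hle⟩).symm))
    · exact .inr (.inr (.inl fun s hs => lt_of_le_of_ne (hle hs) fun h => htT (h ▸ hs)))

theorem locallyIntegrable_one_div_extK (hne : T.Nonempty) (hcl : IsClosed T) {ν : Measure ℝ}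
    (hν : ∀ c d, c ≤ d → ν (Ico c d) = ENNReal.ofReal (tsRho T d - tsRho T c)) {p : ℝ → ℂ}
    (hp : LocallyIntegrable (fun t => 1 / p t) ν) :
    LocallyIntegrable fun t => 1 / extK T p t := by
  refine locallyIntegrable_iff.2 fun k hk => ?_
  have integrableOn_of_eq {s : Set ℝ} {w : ℂ} (hs : MeasurableSet s)
      (hw : ∀ t ∈ s, extK T p t = w) : IntegrableOn (fun t => 1 / extK T p t) (k ∩ s) := by
    have hconst : IntegrableOn (fun _ => 1 / w) (k ∩ s) :=
      integrableOn_const ((measure_mono inter_subset_left).trans_lt hk.measure_lt_top).ne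
    exact hconst.congr_fun (fun t ht => by rw [hw t ht.2]) (hk.measurableSet.inter hs)
  have hull : IntegrableOn (fun t => 1 / extK T p t) (k ∩ tsHull T) :=
    (integrableOn_comp_tsCeil hne hcl hν hp hk).congr_fun
      (fun t ht => by simp only [extK_eq_apply_tsCeil hcl p ht.2])
      (hk.measurableSet.inter (measurableSet_tsHull T))
  have above := integrableOn_of_eq
    (s := {t | ∀ s ∈ T, s < t})
    (OrdConnected.measurableSet ⟨fun _ hx _ _ _ ht s hs => (hx s hs).trans_le ht.1⟩)
    fun _ => extK_eq_of_forall_lt p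
  have below := integrableOn_of_eq
    (s := {t | ∀ s ∈ T, t < s})
    (OrdConnected.measurableSet ⟨fun _ _ _ hy _ ht s hs => ht.2.trans_lt (hy s hs)⟩)
    fun _ => extK_eq_of_forall_gt p
  have endpoint : IntegrableOn (fun t => 1 / extK T p t) {sInf T} :=
    integrableOn_singleton (by simp) (by simp)
  refine (((hull.union above).union below).union endpoint).mono_set fun t ht => ?_
  rcases mem_tsHull_or T t with h | h | h | h
  exacts [.inl (.inl (.inl ⟨ht, h⟩)), .inl (.inl (.inr ⟨ht, h⟩)), .inl (.inr ⟨ht, h⟩), .inr h]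

end TimeScale

lemma IsSLSol.isSystemSolution {T : Set ℝ} {μ : Measure ℝ} {p r q : ℝ → ℂ} {z : ℂ} {u u1 : ℝ → ℂ}
    (hsol : IsSLSol T μ p r q z 0 u u1) :
    IsSystemSolution volume μ (fun t => 1 / extK T p t) (fun t => q t - z * r t) u u1 :=
  .of_forall_le
    (fun x y hxy => by simpa only [one_div_mul_eq_div] using (hsol x y hxy).1)
    (fun x y hxy => by simpa only [Pi.zero_apply, mul_zero, sub_zero] using (hsol x y hxy).2)

theorem solution_entire_in_spectral_parameter_general
    (T : Set ℝ) (hne : T.Nonempty) (hcl : IsClosed T) (μ ν : Measure ℝ)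
    (hμ : ∀ c d : ℝ, c ≤ d →
      μ (Set.Ioc c d) = ENNReal.ofReal (tsSigma (tsKappa T) d - tsSigma (tsKappa T) c))
    (hν : ∀ c d : ℝ, c ≤ d → ν (Set.Ico c d) = ENNReal.ofReal (tsRho T d - tsRho T c))
    (p r q : ℝ → ℂ)
    (hr : LocallyIntegrable r μ) (hq : LocallyIntegrable q μ)
    (hp : LocallyIntegrable (fun t => 1 / p t) ν)
    (c : ℝ) (u u1 : ℂ → ℝ → ℂ) (hsol : ∀ z : ℂ, IsSLSol T μ p r q z 0 (u z) (u1 z))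
    (hu : AnalyticOnNhd ℂ (fun z => u z c) Set.univ)
    (hu1 : AnalyticOnNhd ℂ (fun z => u1 z c) Set.univ) :
    ∀ x : ℝ, AnalyticOnNhd ℂ (fun z => u z x) Set.univ ∧
      AnalyticOnNhd ℂ (fun z => u1 z x) Set.univ := by
  have : IsLocallyFiniteMeasure μ :=
    isLocallyFiniteMeasure_of_Ioc fun c d hcd => hμ c d hcd ▸ ENNReal.ofReal_ne_top
  simp only [Complex.analyticOnNhd_univ_iff_differentiable] at hu hu1 ⊢
  exact IsSystemSolution.differentiable_of_differentiable
    (locallyIntegrable_one_div_extK hne hcl hν hp) hq hr (fun z => (hsol z).isSystemSolution) hu hu1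

/-- The solutions of `(ℓ - z) u = 0` with fixed initial conditions at `c ∈ 𝕋_κ` depend
analytically (entirely) on the spectral parameter `z ∈ ℂ`. -/
theorem solution_entire_in_spectral_parameter
    (T : Set ℝ) (hne : T.Nonempty) (hcl : IsClosed T)
    (hfive : ∃ s : Finset ℝ, ↑s ⊆ T ∧ 5 ≤ s.card)
    (μ ν : Measure ℝ)
    (hμ : ∀ c d : ℝ, c ≤ d →
      μ (Set.Ioc c d) = ENNReal.ofReal (tsSigma (tsKappa T) d - tsSigma (tsKappa T) c))
    (hν : ∀ c d : ℝ, c ≤ d → ν (Set.Ico c d) = ENNReal.ofReal (tsRho T d - tsRho T c))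
    (p r q : ℝ → ℂ)
    (hr : LocallyIntegrable r μ) (hq : LocallyIntegrable q μ)
    (hp : LocallyIntegrable (fun t => 1 / p t) ν)
    (c : ℝ) (hc : c ∈ tsKappa T) (d₁ d₂ : ℂ) (u u1 : ℂ → ℝ → ℂ)
    (hsol : ∀ z : ℂ, IsSLSol T μ p r q z 0 (u z) (u1 z) ∧ u z c = d₁ ∧ u1 z c = d₂) :
    ∀ x : ℝ, AnalyticOnNhd ℂ (fun z => u z x) Set.univ ∧
      AnalyticOnNhd ℂ (fun z => u1 z x) Set.univ := by
  exact solution_entire_in_spectral_parameter_general T hne hcl μ ν hμ hν p r q hr hq hp c u u1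
    (fun z => (hsol z).1) (by simp only [hsol, analyticOnNhd_const])
    (by simp only [hsol, analyticOnNhd_const])
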